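/- arXiv:1104.4820 — 2 statements merged into one kernel-verified Lean document; each statement's English description precedes it below -/
import Mathlib

section
/- An operator A ∈ 𝒯₀ is compact if and only if lim_{n→∞} ⟨A e_n, e_n⟩ = 0; equivalently, if A = Σ_{n=0}^∞ β_n T_{n,n} (strong operator convergence, with Σ β_n convergent), then A is compact if and only if Σ_{n=0}^∞ β_n = 0. -/
/-- `T_{n,m} = Tⁿ (T*)ᵐ` for a bounded operator `T` on a complex Hilbert space. -/
noncomputable def Tnm {H : Type*} [NormedAddCommGroup H] [InnerProductSpace ℂ H]
    [CompleteSpace H] (T : H →L[ℂ] H) (n m : ℕ) : H →L[ℂ] H :=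
  T ^ n * (ContinuousLinearMap.adjoint T) ^ m

/-- The Toeplitz algebra: the norm-closed star-subalgebra of `B(H)` generated by `T`. -/
noncomputable def ToeplitzAlg {H : Type*} [NormedAddCommGroup H] [InnerProductSpace ℂ H]
    [CompleteSpace H] (T : H →L[ℂ] H) : StarSubalgebra ℂ (H →L[ℂ] H) :=
  StarAlgebra.elemental ℂ T

/-- The `k`-th Fourier coefficient `A_k = (1/2π) ∫₀^{2π} e^{-ikθ} U_θ A U_θ* dθ`
(a Bochner integral in `B(H)`). -/
noncomputable def opFourierCoeff {H : Type*} [NormedAddCommGroup H] [InnerProductSpace ℂ H]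
    [CompleteSpace H] (U : ℝ → H →L[ℂ] H) (A : H →L[ℂ] H) (k : ℤ) : H →L[ℂ] H :=
  (2 * Real.pi)⁻¹ • ∫ θ in (0 : ℝ)..(2 * Real.pi),
    Complex.exp (-(k : ℂ) * θ * Complex.I) • (U θ * A * ContinuousLinearMap.adjoint (U θ))

open scoped ComplexInnerProductSpace

open Filter Topology

section Diagonal

variable {ι H : Type*} [NormedAddCommGroup H] [InnerProductSpace ℂ H]

theorem HilbertBasis.hasSum_norm_inner_sq (e : HilbertBasis ι ℂ H) (x : H) :
    HasSum (fun i => ‖⟪e i, x⟫‖ ^ 2) (‖x‖ ^ 2) := by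
  have h := e.hasSum_inner_mul_inner x x
  rw [inner_self_eq_norm_sq_to_K] at h
  have h' := Complex.hasSum_re h
  convert! h' using 1
  · ext i
    rw [← inner_conj_symm x (e i), ← Complex.normSq_eq_conj_mul_self, Complex.ofReal_re,
      Complex.normSq_eq_norm_sq]
  · simp [← Complex.ofReal_pow]

theorem HilbertBasis.inner_apply_of_diagonal (e : HilbertBasis ι ℂ H) {D : H →L[ℂ] H}
    {d : ι → ℂ} (hD : ∀ i, D (e i) = d i • e i) (i : ι) (x : H) :
    ⟪e i, D x⟫ = d i * ⟪e i, x⟫ := by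
  classical
  have h : HasSum (fun j => ⟪e i, D (e.repr x j • e j)⟫) ⟪e i, D x⟫ :=
    ((e.hasSum_repr x).mapL D).mapL (innerSL ℂ (e i))
  refine h.unique ?_
  convert! hasSum_ite_eq i (d i * ⟪e i, x⟫) using 1
  ext j
  rw [map_smul, hD, inner_smul_right, inner_smul_right,
    orthonormal_iff_ite.mp e.orthonormal i j, e.repr_apply_apply]
  by_cases hij : j = i
  · subst hij
    simp [mul_comm]
  · simp [hij, Ne.symm hij]

theorem HilbertBasis.opNorm_le_of_diagonal (e : HilbertBasis ι ℂ H) {D : H →L[ℂ] H}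
    {d : ι → ℂ} (hD : ∀ i, D (e i) = d i • e i) {c : ℝ} (hc : 0 ≤ c) (hd : ∀ i, ‖d i‖ ≤ c) :
    ‖D‖ ≤ c := by
  refine D.opNorm_le_bound hc fun x => ?_
  refine (sq_le_sq₀ (norm_nonneg _) ?_).mp ?_
  · positivity
  rw [mul_pow]
  refine hasSum_le (fun i => ?_) (e.hasSum_norm_inner_sq (D x))
    ((e.hasSum_norm_inner_sq x).mul_left (c ^ 2))
  rw [e.inner_apply_of_diagonal hD, norm_mul, mul_pow]
  gcongr
  exact hd i

theorem HilbertBasis.isCompactOperator_of_diagonal (e : HilbertBasis ℕ ℂ H) [CompleteSpace H]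
    {A : H →L[ℂ] H} {a : ℕ → ℂ} (hA : ∀ n, A (e n) = a n • e n)
    (ha : Tendsto a atTop (𝓝 0)) : IsCompactOperator A := by
  let F : ℕ → H →L[ℂ] H := fun N =>
    ∑ k ∈ Finset.range N, (innerSL ℂ (e k)).smulRight (a k • e k)
  have hF_apply (N n : ℕ) : F N (e n) = (if n < N then a n else 0) • e n := by
    simp [F, orthonormal_iff_ite.mp e.orthonormal, ite_smul]
  refine isCompactOperator_of_tendsto (F := F) (l := atTop) ?_ (.of_forall fun N => ?_)
  · rw [Metric.tendsto_atTop] at ha ⊢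
    intro ε hε
    obtain ⟨N, hN⟩ := ha (ε / 2) (by positivity)
    refine ⟨N, fun M hM => ?_⟩
    rw [dist_eq_norm]
    refine lt_of_le_of_lt (e.opNorm_le_of_diagonal
      (d := fun n => (if n < M then a n else 0) - a n) (fun n => ?_)
      (by positivity) (fun n => ?_)) (half_lt_self hε)
    · rw [sub_apply, hF_apply, hA, sub_smul]
    · split_ifs with h
      · simp only [sub_self, norm_zero]
        positivity
      · simpa using (hN n (by lia)).le
  · refine Submodule.sum_mem (compactOperator (RingHom.id ℂ) H H) fun k _ => ?_
    exact (isCompactOperator_of_locallyCompactSpace_dom (innerSL ℂ (e k))).clm_comp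
      (ContinuousLinearMap.toSpanSingleton ℂ (a k • e k))

theorem HilbertBasis.tendsto_of_isCompactOperator_of_diagonal (e : HilbertBasis ℕ ℂ H)
    {A : H →L[ℂ] H} {a : ℕ → ℂ} (hA : ∀ n, A (e n) = a n • e n)
    (hc : IsCompactOperator A) : Tendsto a atTop (𝓝 0) := by
  refine tendsto_of_subseq_tendsto fun ns hns => ?_
  obtain ⟨K, hK, hAK⟩ := hc.image_closedBall_subset_compact (f := (A : H →ₗ[ℂ] H)) 1
  obtain ⟨y, -, φ, hφ, hy⟩ := hK.tendsto_subseq (x := fun n => A (e (ns n)))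
    fun n => hAK ⟨e (ns n), by simp [e.orthonormal.1], rfl⟩
  have hsub : Tendsto (fun n => ns (φ n)) atTop atTop := hns.comp hφ.tendsto_atTop
  have hy_inner (j : ℕ) : ⟪e j, y⟫ = 0 := by
    refine tendsto_nhds_unique (tendsto_const_nhds.inner hy) (tendsto_const_nhds.congr' ?_)
    filter_upwards [hsub.eventually_gt_atTop j] with n hn
    simp [hA, inner_smul_right, e.orthonormal.2 hn.ne]
  have hy_zero : y = 0 := by
    have h := e.hasSum_norm_inner_sq y
    simp only [hy_inner, norm_zero, ne_eq, OfNat.ofNat_ne_zero, not_false_eq_true, zero_pow] at h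
    simpa using h.unique hasSum_zero
  refine ⟨φ, tendsto_zero_iff_norm_tendsto_zero.mpr ?_⟩
  rw [hy_zero] at hy
  simpa [Function.comp_def, hA, norm_smul, e.orthonormal.1] using hy.norm

theorem HilbertBasis.isCompactOperator_iff_of_diagonal (e : HilbertBasis ℕ ℂ H)
    [CompleteSpace H] {A : H →L[ℂ] H} {a : ℕ → ℂ} (hA : ∀ n, A (e n) = a n • e n) :
    IsCompactOperator A ↔ Tendsto a atTop (𝓝 0) :=
  ⟨e.tendsto_of_isCompactOperator_of_diagonal hA, e.isCompactOperator_of_diagonal hA⟩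

end Diagonal

section Shift

variable {H : Type*} [NormedAddCommGroup H] [InnerProductSpace ℂ H]
  (e : HilbertBasis ℕ ℂ H) {T : H →L[ℂ] H}

theorem shift_pow_apply (hT : ∀ n : ℕ, T (e n) = e (n + 1)) (n k : ℕ) :
    (T ^ n) (e k) = e (k + n) := by
  induction n with
  | zero => simp
  | succ n ih => rw [pow_succ', mul_apply_eq_comp, ih, hT, add_assoc]

variable [CompleteSpace H]

theorem adjoint_shift_pow_apply (hT : ∀ n : ℕ, T (e n) = e (n + 1)) (n k : ℕ) :
    (ContinuousLinearMap.adjoint T ^ n) (e k) = if n ≤ k then e (k - n) else 0 := by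
  have hpow : ContinuousLinearMap.adjoint T ^ n = ContinuousLinearMap.adjoint (T ^ n) := by
    simp only [← ContinuousLinearMap.star_eq_adjoint, star_pow]
  apply e.repr.injective
  ext j
  rw [e.repr_apply_apply, e.repr_apply_apply, hpow, ContinuousLinearMap.adjoint_inner_right,
    shift_pow_apply e hT, orthonormal_iff_ite.mp e.orthonormal]
  split_ifs with h₁ h₂ h₂
  · rw [show k - n = j by lia]
    simp [e.orthonormal.1]
  · lia
  · rw [e.orthonormal.2 (by lia)]
  · simp

theorem Tnm_self_apply (hT : ∀ n : ℕ, T (e n) = e (n + 1)) (n k : ℕ) :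
    Tnm T n n (e k) = (if n ≤ k then 1 else 0 : ℂ) • e k := by
  rw [Tnm, mul_apply_eq_comp, adjoint_shift_pow_apply e hT]
  split_ifs with h
  · rw [shift_pow_apply e hT, Nat.sub_add_cancel h, one_smul]
  · simp

theorem apply_eq_inner_smul_of_mem_closure_span_Tnm (hT : ∀ n : ℕ, T (e n) = e (n + 1))
    {A : H →L[ℂ] H}
    (hA : A ∈ (Submodule.span ℂ
      {B : H →L[ℂ] H | ∃ n : ℕ, B = Tnm T n n}).topologicalClosure) (k : ℕ) :
    A (e k) = ⟪e k, A (e k)⟫ • e k := by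
  have hclosed : IsClosed {B : H →L[ℂ] H | B (e k) = ⟪e k, B (e k)⟫ • e k} :=
    isClosed_eq (by fun_prop) (by fun_prop)
  refine closure_minimal (fun B hB => ?_) hclosed hA
  simp only [Set.mem_ofPred_eq]
  induction hB using Submodule.span_induction with
  | mem B hB =>
    obtain ⟨n, rfl⟩ := hB
    rw [Tnm_self_apply e hT, inner_smul_right, inner_self_eq_norm_sq_to_K, e.orthonormal.1]
    simp
  | zero => simp
  | add B C _ _ hB hC =>
    rw [add_apply, inner_add_right, add_smul, ← hB, ← hC]
  | smul c B _ hB =>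
    rw [smul_apply, inner_smul_right, mul_smul, ← hB]

theorem sum_smul_Tnm_apply (hT : ∀ n : ℕ, T (e n) = e (n + 1))
    (β : ℕ → ℂ) {k N : ℕ} (hN : k + 1 ≤ N) :
    (∑ n ∈ Finset.range N, β n • Tnm T n n) (e k) =
      (∑ n ∈ Finset.range (k + 1), β n) • e k := by
  simp only [sum_apply, smul_apply,
    Tnm_self_apply e hT, smul_smul, ← Finset.sum_smul]
  congr 1
  rw [← Finset.sum_subset (Finset.range_mono hN)]
  · refine Finset.sum_congr rfl fun n hn => ?_
    rw [if_pos (by simpa [Nat.lt_succ_iff] using hn), mul_one]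
  · intro n _ hn
    rw [if_neg (by simpa [Nat.lt_succ_iff] using hn), mul_zero]

end Shift

/-- `A ∈ 𝒯₀` is compact iff its diagonal tends to zero; equivalently, if
`A = Σ β_n T_{n,n}` (strong operator convergence, `Σ β_n` convergent), then `A` is compact
iff `Σ_{n} β_n = 0`. -/
theorem T0_compact_iff {H : Type*} [NormedAddCommGroup H]
    [InnerProductSpace ℂ H] [CompleteSpace H] (e : HilbertBasis ℕ ℂ H) (T : H →L[ℂ] H)
    (hT : ∀ n : ℕ, T (e n) = e (n + 1)) :
    ∀ A ∈ (Submodule.span ℂ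
        {B : H →L[ℂ] H | ∃ n : ℕ, B = Tnm T n n}).topologicalClosure,
      (IsCompactOperator (⇑A) ↔
        Filter.Tendsto (fun n : ℕ => ⟪e n, A (e n)⟫) Filter.atTop (nhds 0)) ∧
      (∀ β : ℕ → ℂ,
        (∀ x : H, Filter.Tendsto
          (fun N : ℕ => (∑ n ∈ Finset.range N, β n • Tnm T n n) x)
          Filter.atTop (nhds (A x))) →
        (∃ s : ℂ, Filter.Tendsto (fun N : ℕ => ∑ n ∈ Finset.range N, β n)
          Filter.atTop (nhds s)) →
        (IsCompactOperator (⇑A) ↔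
          Filter.Tendsto (fun N : ℕ => ∑ n ∈ Finset.range N, β n) Filter.atTop (nhds 0))) := by
  intro A hA
  refine ⟨e.isCompactOperator_iff_of_diagonal
    (apply_eq_inner_smul_of_mem_closure_span_Tnm e hT hA), fun β hβ _ => ?_⟩
  have hdiag (k : ℕ) : A (e k) = (∑ n ∈ Finset.range (k + 1), β n) • e k := by
    refine tendsto_nhds_unique (hβ (e k)) (tendsto_const_nhds.congr' ?_)
    filter_upwards [eventually_ge_atTop (k + 1)] with N hN
    exact (sum_smul_Tnm_apply e hT β hN).symm
  rw [e.isCompactOperator_iff_of_diagonal hdiag]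
  exact tendsto_add_atTop_iff_nat (f := fun N => ∑ n ∈ Finset.range N, β n) 1
end

section
/- An operator A ∈ 𝒯 is compact if and only if its k-th Fourier coefficient A_k is a compact operator for every k ∈ ℤ. -/
open MeasureTheory AddCircle

section Fourier

variable {P : ℝ} [Fact (0 < P)] {E F : Type*} [NormedAddCommGroup E] [NormedSpace ℂ E]
  [CompleteSpace E] [NormedAddCommGroup F] [NormedSpace ℂ F] [CompleteSpace F]

theorem fourierCoeff_clm_comp (L : E →L[ℂ] F) (f : C(AddCircle P, E)) (n : ℤ) :
    fourierCoeff (fun x => L (f x)) n = L (fourierCoeff f n) := by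
  have hint : Integrable (fun t : AddCircle P => fourier (-n) t • f t) haarAddCircle :=
    (Continuous.smul (map_continuous _) (map_continuous f)).integrable_of_hasCompactSupport
      (HasCompactSupport.of_compactSpace _)
  simp only [fourierCoeff]
  rw [← L.integral_comp_comm hint]
  simp only [map_smul]

/-- A continuous function on the circle with values in a Banach space vanishes if all its Fourier
coefficients do. -/
theorem eq_zero_of_fourierCoeff_eq_zero (f : C(AddCircle P, E)) (h : ∀ n, fourierCoeff f n = 0)
    (x : AddCircle P) : f x = 0 := by
  refine SeparatingDual.eq_zero_of_forall_dual_eq_zero (R := ℂ) fun φ => ?_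
  let g : C(AddCircle P, ℂ) := ⟨fun y => φ (f y), by fun_prop⟩
  have hg : fourierCoeff g = 0 := by
    funext n
    exact (fourierCoeff_clm_comp φ f n).trans (by rw [h n, map_zero, Pi.zero_apply])
  have hsum := has_pointwise_sum_fourier_series_of_summable (f := g) (hg ▸ summable_zero) x
  simp only [hg, Pi.zero_apply, zero_smul] at hsum
  exact hsum.unique hasSum_zero

/-- A continuous function on the circle takes its values in a closed subspace if and only if its
Fourier coefficients lie in that subspace. -/
theorem fourierCoeff_mem_iff_forall_mem (K : Submodule ℂ E) (hK : IsClosed (K : Set E))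
    (f : C(AddCircle P, E)) : (∀ n, fourierCoeff f n ∈ K) ↔ ∀ x, f x ∈ K := by
  have : IsClosed (K : Set E) := hK
  let g : C(AddCircle P, E ⧸ K) := ⟨fun y => K.mkQL (f y), by fun_prop⟩
  have hg (n : ℤ) : fourierCoeff g n = K.mkQL (fourierCoeff f n) :=
    fourierCoeff_clm_comp K.mkQL f n
  have hK0 (v : E) : K.mkQL v = 0 ↔ v ∈ K := Submodule.Quotient.mk_eq_zero K
  constructor
  · intro h x
    exact (hK0 _).1 (eq_zero_of_fourierCoeff_eq_zero g (fun n => by rw [hg, hK0]; exact h n) x)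
  · intro h n
    have hzero : (g : AddCircle P → E ⧸ K) = 0 := funext fun x => (hK0 _).2 (h x)
    rw [← hK0, ← hg, hzero]
    simp [fourierCoeff]

end Fourier

/-- If conjugation of `T` by a family of unitaries is norm continuous, then so is conjugation of
every element of the closed star-subalgebra generated by `T`. -/
theorem continuous_conj_of_mem_elemental {X B : Type*} [TopologicalSpace X] [CStarAlgebra B]
    (u : X → B) (hu : ∀ x, u x ∈ unitary B) {T A : B}
    (hT : Continuous fun x => u x * T * star (u x)) (hA : A ∈ StarAlgebra.elemental ℂ T) :
    Continuous fun x => u x * A * star (u x) := by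
  induction hA using StarAlgebra.elemental.induction_on with
  | self => exact hT
  | star_self => simpa [mul_assoc] using hT.star
  | algebraMap r =>
    have (x : X) : u x * algebraMap ℂ B r * star (u x) = algebraMap ℂ B r := by
      rw [← Algebra.commutes, mul_assoc, Unitary.mul_star_self_of_mem (hu x), mul_one]
    simpa only [this] using continuous_const
  | add a _ b _ ha hb => simpa only [mul_add, add_mul] using! ha.add hb
  | mul a _ b _ ha hb =>
    have (x : X) : u x * (a * b) * star (u x) =
        (u x * a * star (u x)) * (u x * b * star (u x)) := by
      calc u x * (a * b) * star (u x) = u x * a * 1 * b * star (u x) := by noncomm_ring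
        _ = _ := by rw [← Unitary.star_mul_self_of_mem (hu x)]; noncomm_ring
    simpa only [this] using! ha.mul hb
  | closure s _ hs a ha =>
    refine continuous_of_uniform_approx_of_continuous fun v hv => ?_
    obtain ⟨ε, hε, hεv⟩ := Metric.mem_uniformity_dist.1 hv
    obtain ⟨b, hb, hab⟩ := Metric.mem_closure_iff.1 ha ε hε
    refine ⟨_, hs b hb, fun x => hεv ?_⟩
    rwa [dist_eq_norm, ← sub_mul, ← mul_sub,
      CStarRing.norm_mul_mem_unitary _ (Unitary.star_mem (hu x)),
      CStarRing.norm_mem_unitary_mul _ (hu x), ← dist_eq_norm]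

section Hilbert

variable {H : Type*} [NormedAddCommGroup H] [InnerProductSpace ℂ H] (e : HilbertBasis ℕ ℂ H)

theorem HilbertBasis.clm_ext {S R : H →L[ℂ] H} (h : ∀ n, S (e n) = R (e n)) : S = R :=
  ContinuousLinearMap.ext_on
    (Submodule.dense_iff_topologicalClosure_eq_top.2 e.dense_span)
    (by rintro _ ⟨n, rfl⟩; exact h n)

variable [CompleteSpace H]

theorem HilbertBasis.star_apply_of_diagonal {D : H →L[ℂ] H} {c : ℕ → ℂ}
    (hD : ∀ n, D (e n) = c n • e n) (n : ℕ) : star D (e n) = star (c n) • e n := by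
  refine e.repr.injective (lp.ext (funext fun m => ?_))
  rw [e.repr_apply_apply, e.repr_apply_apply, ContinuousLinearMap.star_eq_adjoint,
    ContinuousLinearMap.adjoint_inner_right, hD, inner_smul_left, inner_smul_right,
    orthonormal_iff_ite.1 e.orthonormal]
  split_ifs with h <;> simp [h]

theorem HilbertBasis.mem_unitary_of_diagonal {D : H →L[ℂ] H} {c : ℕ → ℂ}
    (hD : ∀ n, D (e n) = c n • e n) (hc : ∀ n, ‖c n‖ = 1) : D ∈ unitary (H →L[ℂ] H) := by
  have hcc (n : ℕ) : (starRingEnd ℂ) (c n) * c n = 1 := by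
    simp [Complex.conj_mul', hc]
  rw [Unitary.mem_iff]
  constructor <;> refine e.clm_ext fun n => ?_
  · simp [hD, e.star_apply_of_diagonal hD, smul_smul, mul_comm (c n), hcc n]
  · simp [hD, e.star_apply_of_diagonal hD, smul_smul, hcc n]

end Hilbert

/-- an operator `A ∈ 𝒯` is compact iff all its Fourier coefficients `A_k`
are compact operators. -/
theorem isCompactOperator_iff_opFourierCoeff {H : Type*} [NormedAddCommGroup H]
    [InnerProductSpace ℂ H] [CompleteSpace H] (e : HilbertBasis ℕ ℂ H) (T : H →L[ℂ] H)
    (hT : ∀ n : ℕ, T (e n) = e (n + 1))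
    (U : ℝ → H →L[ℂ] H)
    (hU : ∀ (θ : ℝ) (n : ℕ), U θ (e n) = Complex.exp ((n : ℂ) * θ * Complex.I) • e n)
    (A : H →L[ℂ] H) (hA : A ∈ ToeplitzAlg T) :
    IsCompactOperator (⇑A) ↔ ∀ k : ℤ, IsCompactOperator (⇑(opFourierCoeff U A k)) := by
  have hUu (θ : ℝ) : U θ ∈ unitary (H →L[ℂ] H) :=
    e.mem_unitary_of_diagonal (hU θ) fun n => by
      simpa using Complex.norm_exp_ofReal_mul_I (n * θ)
  have hUT (θ : ℝ) : U θ * T * star (U θ) = Complex.exp (θ * Complex.I) • T := by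
    have hcomm : U θ * T = (Complex.exp (θ * Complex.I) • T) * U θ := by
      refine e.clm_ext fun n => ?_
      simp only [mul_apply_eq_comp, hT, hU, map_smul, smul_apply,
        smul_smul, ← Complex.exp_add]
      congr 2
      push_cast
      ring
    rw [hcomm, mul_assoc, Unitary.mul_star_self_of_mem (hUu θ), mul_one]
  have hcont : Continuous fun θ => U θ * A * star (U θ) :=
    continuous_conj_of_mem_elemental U hUu (by simp only [hUT]; fun_prop) hA
  have hUper : Function.Periodic U (2 * Real.pi) := fun θ => by
    refine e.clm_ext fun n => ?_
    rw [hU, hU]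
    congr 1
    refine Complex.exp_eq_exp_iff_exists_int.2 ⟨n, ?_⟩
    push_cast
    ring
  have hper : Function.Periodic (fun θ => U θ * A * star (U θ)) (2 * Real.pi) := fun θ => by
    simp only [hUper θ]
  have : Fact (0 < 2 * Real.pi) := ⟨Real.two_pi_pos⟩
  let f : C(AddCircle (2 * Real.pi), H →L[ℂ] H) := ⟨hper.lift, continuous_quot_lift _ hcont⟩
  have hf (θ : ℝ) : f θ = U θ * A * star (U θ) := rfl
  have hcoeff (k : ℤ) : opFourierCoeff U A k = fourierCoeff f k := by
    rw [fourierCoeff_eq_intervalIntegral _ _ 0, opFourierCoeff, zero_add, one_div]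
    congr 1
    refine intervalIntegral.integral_congr fun θ _ => ?_
    simp only [fourier_coe_apply, hf, ContinuousLinearMap.star_eq_adjoint]
    congr 2
    push_cast
    field_simp
  have hU0 : U 0 = 1 := e.clm_ext fun n => by simp [hU]
  have key := fourierCoeff_mem_iff_forall_mem (compactOperator (RingHom.id ℂ) H H)
    isClosed_setOfPred_isCompactOperator f
  simp only [hcoeff]
  refine Iff.trans ?_ key.symm
  constructor
  · intro hAc x
    induction x using QuotientAddGroup.induction_on with
    | H θ => exact (hAc.comp_clm (star (U θ))).clm_comp (U θ)
  · intro h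
    have h0 := h ((0 : ℝ) : AddCircle (2 * Real.pi))
    rw [hf, hU0, star_one, one_mul, mul_one] at h0
    exact h0
end
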